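/- In the linear model (p_k = k/m for all 0 ≤ k ≤ m) with X_0 > 0 and Y_0 > 0, the almost sure limit a = lim_{n→∞} a_n has full support on [0,1]: for every interval (r, r+ε) ⊂ (0,1) with ε > 0, one has P(a ∈ (r, r+ε)) > 0. -/

import Mathlib

open MeasureTheory ProbabilityTheory Filter Set

noncomputable section

/-- The polynomial `P(z) = (1/2) ∑_{k=0}^m C(m,k) z^k (1-z)^{m-k} (p_k - k/m)`. -/
def polyP (m : ℕ) (p : ℕ → ℝ) (z : ℝ) : ℝ :=
  (1 / 2) * ∑ k ∈ Finset.range (m + 1),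
    (m.choose k : ℝ) * z ^ k * (1 - z) ^ (m - k) * (p k - (k : ℝ) / m)

/-- The zero set `Z_P = {z ∈ [0,1] : P(z) = 0}`. -/
def zeroSetP (m : ℕ) (p : ℕ → ℝ) : Set ℝ :=
  {z ∈ Set.Icc (0 : ℝ) 1 | polyP m p z = 0}

/-- The two-type preferential attachment process with `m` edges per new node and type
adoption parameters `p 0, …, p m`, defined on a probability space `(Ω, μ)` with filtration
`F`.  `A n` is the number of red nodes and `X n` the sum of the degrees of red nodes at time
`n`; the transition probabilities given `F n` are those of the model: a number `k` of red
neighbours is drawn from the `Binomial(m, x_n)` distribution, and then the new node is red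
with probability `p k` (adding `1` to the red nodes and `k + m` to the red degrees) and blue
with probability `1 - p k` (adding `k` to the red degrees). -/
structure PAProcess (Ω : Type) [MeasurableSpace Ω] where
  μ : Measure Ω
  isProb : IsProbabilityMeasure μ
  m : ℕ
  hm : 1 ≤ m
  p : ℕ → ℝ
  hp : ∀ k ≤ m, p k ∈ Set.Icc (0 : ℝ) 1
  A : ℕ → Ω → ℕ
  X : ℕ → Ω → ℕ
  F : Filtration ℕ ‹MeasurableSpace Ω›
  A0 : ℕ
  B0 : ℕ
  X0 : ℕ
  Y0 : ℕ
  hA0 : ∀ ω, A 0 ω = A0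
  hX0 : ∀ ω, X 0 ω = X0
  adaptedA : ∀ n, Measurable[F n] (A n)
  adaptedX : ∀ n, Measurable[F n] (X n)
  hXle : ∀ n ω, X n ω ≤ X0 + Y0 + 2 * m * n
  step_red : ∀ n, ∀ k ≤ m,
    μ[Set.indicator {ω | A (n + 1) ω = A n ω + 1 ∧ X (n + 1) ω = X n ω + k + m}
        (fun _ => (1 : ℝ)) | F n]
      =ᵐ[μ] fun ω => (m.choose k : ℝ) *
        ((X n ω : ℝ) / ((X0 : ℝ) + Y0 + 2 * m * n)) ^ k *
        (1 - (X n ω : ℝ) / ((X0 : ℝ) + Y0 + 2 * m * n)) ^ (m - k) * p k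
  step_blue : ∀ n, ∀ k ≤ m,
    μ[Set.indicator {ω | A (n + 1) ω = A n ω ∧ X (n + 1) ω = X n ω + k}
        (fun _ => (1 : ℝ)) | F n]
      =ᵐ[μ] fun ω => (m.choose k : ℝ) *
        ((X n ω : ℝ) / ((X0 : ℝ) + Y0 + 2 * m * n)) ^ k *
        (1 - (X n ω : ℝ) / ((X0 : ℝ) + Y0 + 2 * m * n)) ^ (m - k) * (1 - p k)

namespace PAProcess

variable {Ω : Type} [MeasurableSpace Ω] (P : PAProcess Ω)

/-- Total degree `S_n = S_0 + 2mn`. -/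
def S (n : ℕ) : ℕ := P.X0 + P.Y0 + 2 * P.m * n

/-- Normalized red degree `x_n = X_n / S_n`. -/
def x (n : ℕ) (ω : Ω) : ℝ := (P.X n ω : ℝ) / (P.S n : ℝ)

/-- Normalized red node count `a_n = A_n / (A_0 + B_0 + n)`. -/
def a (n : ℕ) (ω : Ω) : ℝ := (P.A n ω : ℝ) / ((P.A0 : ℝ) + P.B0 + n)

/-- The polynomial `P` of the process. -/
def poly : ℝ → ℝ := polyP P.m P.p

/-- The zero set `Z_P` of the process. -/
def Zp : Set ℝ := zeroSetP P.m P.p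

end PAProcess

/-!
In the linear model both `x_n` and the excess `X_n - X_0 - 2m(A_n - A_0)` are martingales. The
increments of the excess are bounded by `m`, so the excess is negligible against `S_n` in
probability; hence `x_n` converges in measure to the limit of `a_n`, and it suffices to give `x_n`
a mass bounded away from zero near a prescribed point `t ∈ [0,1]` for all large `n`.

At time `N`, each grid point `(X_0 + 2mj)/S_N` with `j ≤ N` is reached with positive probability:
join `j` red nodes to red nodes only and `N - j` blue nodes to blue nodes only. The grid has mesh
of order `1/N`, so it has points near `t`. From then on `x` moves by at most `1/(n+1)` at step
`n + 1`, its conditional variance after time `N` is at most `∑_{n > N} 1/n² ≤ 1/N`, and for `N`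
large Chebyshev's inequality keeps `x_n` near the grid point with conditional probability at least
`1/2`, for every `n ≥ N`.
-/

section ConditionalExpectation

variable {Ω : Type*} {m m₀ : MeasurableSpace Ω} {μ : Measure Ω}

theorem measure_inter_pos_of_condExp_indicator_pos [IsFiniteMeasure μ] (hm : m ≤ m₀)
    {E s : Set Ω} (hE : MeasurableSet[m] E) (hs : MeasurableSet s) (hμE : 0 < μ E)
    (hpos : ∀ᵐ ω ∂μ, ω ∈ E → 0 < (μ[s.indicator (fun _ => (1 : ℝ)) | m]) ω) :
    0 < μ (E ∩ s) := by
  set g := μ[s.indicator (fun _ => (1 : ℝ)) | m]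
  have hg_nonneg : 0 ≤ᵐ[μ.restrict E] g :=
    (ae_restrict_iff' (hm E hE)).2 (hpos.mono fun ω hω hωE => (hω hωE).le)
  have hE_le : μ E ≤ μ (Function.support g ∩ E) :=
    measure_mono_ae (hpos.mono fun ω hω hωE => ⟨(hω hωE).ne', hωE⟩)
  have hg_pos : 0 < ∫ ω in E, g ω ∂μ :=
    (setIntegral_pos_iff_support_of_nonneg_ae hg_nonneg integrable_condExp.integrableOn).2
      (hμE.trans_le hE_le)
  have hg_eq : ∫ ω in E, g ω ∂μ = μ.real (E ∩ s) := by
    rw [setIntegral_condExp hm ((integrable_const 1).indicator hs) hE, setIntegral_indicator hs]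
    simp
  rw [hg_eq] at hg_pos
  exact (ENNReal.toReal_pos_iff.1 hg_pos).1

variable {ι : Type*} {I : Finset ι} {s : ι → Set Ω}

theorem ae_exists_mem_of_sum_condExp_indicator_eq_one [IsProbabilityMeasure μ] (hm : m ≤ m₀)
    (hs : ∀ i ∈ I, MeasurableSet (s i)) (hdisj : (I : Set ι).PairwiseDisjoint s)
    (hsum : ∀ᵐ ω ∂μ, ∑ i ∈ I, (μ[(s i).indicator (fun _ => (1 : ℝ)) | m]) ω = 1) :
    ∀ᵐ ω ∂μ, ∃ i ∈ I, ω ∈ s i := by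
  have hreal : μ.real (⋃ i ∈ I, s i) = 1 := by
    calc μ.real (⋃ i ∈ I, s i) = ∑ i ∈ I, μ.real (s i) := measureReal_biUnion_finset hdisj hs
      _ = ∑ i ∈ I, ∫ ω, (μ[(s i).indicator (fun _ => (1 : ℝ)) | m]) ω ∂μ := by
        refine Finset.sum_congr rfl fun i hi => ?_
        rw [integral_condExp hm]
        exact (integral_indicator_one (hs i hi)).symm
      _ = 1 := by
        rw [← integral_finsetSum _ fun i _ => integrable_condExp, integral_congr_ae hsum]
        simp
  have hmem := (mem_ae_iff_prob_eq_one (I.measurableSet_biUnion hs)).2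
    ((ENNReal.toReal_eq_one_iff _).1 hreal)
  filter_upwards [hmem] with ω hω
  simpa using hω

variable (m) in
theorem condExp_eq_sum_of_eqOn_const [IsFiniteMeasure μ]
    (hs : ∀ i ∈ I, MeasurableSet (s i)) (hdisj : (I : Set ι).PairwiseDisjoint s)
    (hcover : ∀ᵐ ω ∂μ, ∃ i ∈ I, ω ∈ s i) {f : Ω → ℝ} {c : ι → ℝ}
    (hf : ∀ i ∈ I, EqOn f (fun _ => c i) (s i)) :
    μ[f | m] =ᵐ[μ] ∑ i ∈ I, c i • μ[(s i).indicator (fun _ => (1 : ℝ)) | m] := by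
  have hf_sum : f =ᵐ[μ] ∑ i ∈ I, c i • (s i).indicator (fun _ => (1 : ℝ)) := by
    filter_upwards [hcover] with ω ⟨i, hi, hω⟩
    rw [Finset.sum_apply, Finset.sum_eq_single_of_mem i hi]
    · simp [hω, hf i hi hω]
    · intro j hj hji
      simp [disjoint_left.1 (hdisj hi hj hji.symm) hω]
  calc μ[f | m] =ᵐ[μ] μ[∑ i ∈ I, c i • (s i).indicator (fun _ => (1 : ℝ)) | m] :=
        condExp_congr_ae hf_sum
    _ =ᵐ[μ] ∑ i ∈ I, μ[c i • (s i).indicator (fun _ => (1 : ℝ)) | m] :=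
        condExp_finsetSum (μ := μ)
          (fun i hi => ((integrable_const (1 : ℝ)).indicator (hs i hi)).smul (c i)) m
    _ =ᵐ[μ] ∑ i ∈ I, c i • μ[(s i).indicator (fun _ => (1 : ℝ)) | m] :=
        eventuallyEq_sum fun i _ => condExp_smul (c i) _ m

end ConditionalExpectation

section Martingale

variable {Ω : Type*} {m₀ : MeasurableSpace Ω} {μ : Measure Ω}

section Preorder

variable {ι : Type*} [Preorder ι] {ℱ : Filtration ι m₀} [SigmaFiniteFiltration μ ℱ]
  {f : ι → Ω → ℝ}

theorem setIntegral_mul_sub_eq_zero_of_martingale (hf : Martingale f ℱ μ) {i j : ι}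
    (hij : i ≤ j) {U : Ω → ℝ} (hU : StronglyMeasurable[ℱ i] U)
    (hint : Integrable (U * (f j - f i)) μ) {E : Set Ω} (hE : MeasurableSet[ℱ i] E) :
    ∫ ω in E, (U * (f j - f i)) ω ∂μ = 0 := by
  have hsub : μ[f j - f i | ℱ i] =ᵐ[μ] 0 := by
    filter_upwards [condExp_sub (hf.integrable j) (hf.integrable i) (ℱ i),
      hf.condExp_ae_eq hij, hf.condExp_ae_eq (le_refl i)] with ω h h_j h_i
    simp [h, h_j, h_i]
  have hpull : μ[U * (f j - f i) | ℱ i] =ᵐ[μ] 0 := by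
    filter_upwards [condExp_mul_of_stronglyMeasurable_left hU hint
      ((hf.integrable j).sub (hf.integrable i)), hsub] with ω h h_sub
    simp [h, h_sub]
  calc ∫ ω in E, (U * (f j - f i)) ω ∂μ
      = ∫ ω in E, (μ[U * (f j - f i) | ℱ i]) ω ∂μ := (setIntegral_condExp (ℱ.le i) hint hE).symm
    _ = 0 := by
      rw [integral_congr_ae (ae_restrict_of_ae hpull)]
      simp

theorem setIntegral_sq_sub_eq_add_of_martingale (hf : Martingale f ℱ μ) {i j k : ι} (hij : i ≤ j)
    (hjk : j ≤ k) (h_ij : MemLp (f j - f i) 2 μ) (h_jk : MemLp (f k - f j) 2 μ) {E : Set Ω}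
    (hE : MeasurableSet[ℱ j] E) :
    ∫ ω in E, (f k ω - f i ω) ^ 2 ∂μ =
      ∫ ω in E, (f j ω - f i ω) ^ 2 ∂μ + ∫ ω in E, (f k ω - f j ω) ^ 2 ∂μ := by
  have hcross : Integrable ((f j - f i) * (f k - f j)) μ := h_ij.integrable_mul h_jk
  have horth : ∫ ω in E, ((f j - f i) * (f k - f j)) ω ∂μ = 0 :=
    setIntegral_mul_sub_eq_zero_of_martingale hf hjk
      ((hf.stronglyAdapted j).sub ((hf.stronglyAdapted i).mono (ℱ.mono hij))) hcross hE
  have h_ij_sq : Integrable (fun ω => (f j ω - f i ω) ^ 2) μ := h_ij.integrable_sq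
  have h_jk_sq : Integrable (fun ω => (f k ω - f j ω) ^ 2) μ := h_jk.integrable_sq
  have h_sum : Integrable (fun ω => (f j ω - f i ω) ^ 2 + (f k ω - f j ω) ^ 2) μ :=
    h_ij_sq.add h_jk_sq
  calc ∫ ω in E, (f k ω - f i ω) ^ 2 ∂μ
      = ∫ ω in E, ((f j ω - f i ω) ^ 2 + (f k ω - f j ω) ^ 2
          + 2 * ((f j - f i) * (f k - f j)) ω) ∂μ := by
        congr with ω
        simp only [Pi.mul_apply, Pi.sub_apply]
        ring
    _ = ∫ ω in E, (f j ω - f i ω) ^ 2 ∂μ + ∫ ω in E, (f k ω - f j ω) ^ 2 ∂μ := by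
        rw [integral_add h_sum.integrableOn (hcross.const_mul 2).integrableOn,
          integral_add h_ij_sq.integrableOn h_jk_sq.integrableOn, integral_const_mul, horth,
          mul_zero, add_zero]

end Preorder

theorem ae_abs_sub_le_sum_of_abs_sub_le {f : ℕ → Ω → ℝ} {c : ℕ → ℝ}
    (hc : ∀ n, ∀ᵐ ω ∂μ, |f (n + 1) ω - f n ω| ≤ c n) {N n : ℕ} (hn : N ≤ n) :
    ∀ᵐ ω ∂μ, |f n ω - f N ω| ≤ ∑ i ∈ Finset.Ico N n, c i := by
  filter_upwards [ae_all_iff.2 hc] with ω hω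
  rw [abs_sub_comm, ← Real.dist_eq]
  refine dist_le_Ico_sum_of_dist_le (f := fun k => f k ω) hn fun {k} _ _ => ?_
  rw [Real.dist_eq, abs_sub_comm]
  exact hω k

variable [IsFiniteMeasure μ] {ℱ : Filtration ℕ m₀} {f : ℕ → Ω → ℝ} {c : ℕ → ℝ} {N n : ℕ}
  {E : Set Ω}

theorem setIntegral_sq_sub_le_of_martingale (hf : Martingale f ℱ μ)
    (hc : ∀ n, ∀ᵐ ω ∂μ, |f (n + 1) ω - f n ω| ≤ c n) (hn : N ≤ n) (hE : MeasurableSet[ℱ N] E) :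
    ∫ ω in E, (f n ω - f N ω) ^ 2 ∂μ ≤ (∑ i ∈ Finset.Ico N n, c i ^ 2) * μ.real E := by
  have hL2 {i j : ℕ} (hij : i ≤ j) : MemLp (f j - f i) 2 μ :=
    .of_bound ((hf.integrable j).sub (hf.integrable i)).aestronglyMeasurable _
      (ae_abs_sub_le_sum_of_abs_sub_le hc hij)
  induction n, hn using Nat.le_induction with
  | base => simp
  | succ n hn ih =>
    have hincr : ∫ ω in E, (f (n + 1) ω - f n ω) ^ 2 ∂μ ≤ c n ^ 2 * μ.real E := by
      calc ∫ ω in E, (f (n + 1) ω - f n ω) ^ 2 ∂μ ≤ ∫ ω in E, c n ^ 2 ∂μ := by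
            refine setIntegral_mono_ae (hL2 n.le_succ).integrable_sq.integrableOn (by simp) ?_
            filter_upwards [hc n] with ω hω
            exact sq_le_sq.2 (hω.trans (le_abs_self _))
        _ = c n ^ 2 * μ.real E := by simp [mul_comm]
    rw [setIntegral_sq_sub_eq_add_of_martingale hf hn n.le_succ (hL2 hn) (hL2 n.le_succ)
      (ℱ.mono hn E hE), Finset.sum_Ico_succ_top hn, add_mul]
    exact add_le_add ih hincr

theorem sq_mul_measureReal_inter_le_of_martingale (hf : Martingale f ℱ μ)
    (hc : ∀ n, ∀ᵐ ω ∂μ, |f (n + 1) ω - f n ω| ≤ c n) (hn : N ≤ n) (hE : MeasurableSet[ℱ N] E)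
    {δ : ℝ} (hδ : 0 ≤ δ) :
    δ ^ 2 * μ.real (E ∩ {ω | δ ≤ |f n ω - f N ω|}) ≤
      (∑ i ∈ Finset.Ico N n, c i ^ 2) * μ.real E := by
  have hL2 : MemLp (f n - f N) 2 μ :=
    .of_bound ((hf.integrable n).sub (hf.integrable N)).aestronglyMeasurable _
      (ae_abs_sub_le_sum_of_abs_sub_le hc hn)
  calc δ ^ 2 * μ.real (E ∩ {ω | δ ≤ |f n ω - f N ω|})
      = δ ^ 2 * (μ.restrict E).real {ω | δ ^ 2 ≤ (f n ω - f N ω) ^ 2} := by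
        rw [measureReal_restrict_apply' (ℱ.le N E hE), inter_comm]
        simp only [← sq_abs (f n _ - f N _), sq_le_sq₀ hδ (abs_nonneg _)]
    _ ≤ ∫ ω in E, (f n ω - f N ω) ^ 2 ∂μ :=
        mul_meas_ge_le_integral_of_nonneg (ae_of_all _ fun ω => sq_nonneg _)
          hL2.integrable_sq.integrableOn _
    _ ≤ (∑ i ∈ Finset.Ico N n, c i ^ 2) * μ.real E :=
        setIntegral_sq_sub_le_of_martingale hf hc hn hE

theorem half_measureReal_le_inter_abs_sub_lt_of_martingale (hf : Martingale f ℱ μ)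
    (hc : ∀ n, ∀ᵐ ω ∂μ, |f (n + 1) ω - f n ω| ≤ c n) (hn : N ≤ n) (hE : MeasurableSet[ℱ N] E)
    {δ : ℝ} (hδ : 0 < δ) (hsum : 2 * ∑ i ∈ Finset.Ico N n, c i ^ 2 ≤ δ ^ 2) :
    μ.real E / 2 ≤ μ.real (E ∩ {ω | |f n ω - f N ω| < δ}) := by
  have hcheb := sq_mul_measureReal_inter_le_of_martingale hf hc hn hE hδ.le
  have hfar : μ.real (E ∩ {ω | δ ≤ |f n ω - f N ω|}) ≤ μ.real E / 2 := by
    refine le_of_mul_le_mul_left (hcheb.trans ?_) (sq_pos_of_pos hδ)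
    nlinarith [measureReal_nonneg (μ := μ) (s := E)]
  have hsplit : μ.real E ≤ μ.real (E ∩ {ω | |f n ω - f N ω| < δ}) +
      μ.real (E ∩ {ω | δ ≤ |f n ω - f N ω|}) := by
    refine (measureReal_mono fun ω hω => ?_).trans (measureReal_union_le _ _)
    exact (lt_or_ge |f n ω - f N ω| δ).imp (⟨hω, ·⟩) (⟨hω, ·⟩)
  linarith

theorem tendstoInMeasure_sub_div_of_martingale (hf : Martingale f ℱ μ) {K : ℝ}
    (hK : ∀ n, ∀ᵐ ω ∂μ, |f (n + 1) ω - f n ω| ≤ K) {b : ℕ → ℝ}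
    (hb : Tendsto (fun n : ℕ => n / b n ^ 2) atTop (nhds 0)) :
    TendstoInMeasure μ (fun n ω => (f n ω - f 0 ω) / b n) atTop 0 := by
  refine tendstoInMeasure_iff_measureReal_norm.2 fun ε hε => ?_
  have hbound : Tendsto (fun n : ℕ => (n / b n ^ 2) * (K ^ 2 * μ.real univ / ε ^ 2)) atTop
      (nhds 0) := by simpa using hb.mul_const (K ^ 2 * μ.real univ / ε ^ 2)
  refine squeeze_zero (fun _ => measureReal_nonneg) (fun n => ?_) hbound
  rcases eq_or_ne (b n) 0 with hbn | hbn
  · simp [hbn, hε.not_ge]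
  have hbn' : 0 < |b n| := abs_pos.2 hbn
  have hcheb := sq_mul_measureReal_inter_le_of_martingale hf hK n.zero_le MeasurableSet.univ
    (mul_pos hε hbn').le
  rw [univ_inter, mul_pow, sq_abs] at hcheb
  have hset : {ω | ε ≤ ‖(f n ω - f 0 ω) / b n - (0 : Ω → ℝ) ω‖} =
      {ω | ε * |b n| ≤ |f n ω - f 0 ω|} := by
    ext ω
    simp [le_div_iff₀ hbn']
  rw [hset]
  calc μ.real {ω | ε * |b n| ≤ |f n ω - f 0 ω|} ≤ n * K ^ 2 * μ.real univ / (ε ^ 2 * b n ^ 2) := by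
        rw [le_div_iff₀' (by positivity)]
        simpa using hcheb
    _ = (n / b n ^ 2) * (K ^ 2 * μ.real univ / ε ^ 2) := by
        field_simp

end Martingale

theorem tendstoInMeasure_add {Ω E ι : Type*} {_ : MeasurableSpace Ω} {μ : Measure Ω}
    [SeminormedAddCommGroup E] {l : Filter ι} {f₁ f₂ : ι → Ω → E} {g₁ g₂ : Ω → E}
    (h₁ : TendstoInMeasure μ f₁ l g₁) (h₂ : TendstoInMeasure μ f₂ l g₂) :
    TendstoInMeasure μ (f₁ + f₂) l (g₁ + g₂) := by
  refine tendstoInMeasure_iff_dist.2 fun ε hε => ?_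
  have hlim := (tendstoInMeasure_iff_dist.1 h₁ _ (half_pos hε)).add
    (tendstoInMeasure_iff_dist.1 h₂ _ (half_pos hε))
  rw [add_zero] at hlim
  refine tendsto_of_tendsto_of_tendsto_of_le_of_le tendsto_const_nhds hlim
    (fun _ => zero_le) fun i => (measure_mono fun ω hω => ?_).trans (measure_union_le _ _)
  by_contra! hclose
  simp only [mem_union, mem_ofPred_eq, not_or, not_le] at hclose hω
  have htri := dist_add_add_le (f₁ i ω) (f₂ i ω) (g₁ ω) (g₂ ω)
  simp only [Pi.add_apply] at hω
  linarith

theorem measure_dist_lt_pos_of_tendstoInMeasure {Ω α ι : Type*} {_ : MeasurableSpace Ω}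
    {μ : Measure Ω} [PseudoMetricSpace α] {l : Filter ι} {f : ι → Ω → α} {g : Ω → α}
    (hfg : TendstoInMeasure μ f l g) {t : α} {δ δ' : ℝ} (hδ : δ < δ') {c : ENNReal} (hc : 0 < c)
    (hf : ∃ᶠ i in l, c ≤ μ {ω | dist (f i ω) t < δ}) : 0 < μ {ω | dist (g ω) t < δ'} := by
  refine pos_iff_ne_zero.2 fun hzero => ?_
  have hfar : ∀ᶠ i in l, μ {ω | δ' - δ ≤ dist (f i ω) (g ω)} < c :=
    (tendstoInMeasure_iff_dist.1 hfg (δ' - δ) (sub_pos.2 hδ)).eventually_lt_const hc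
  obtain ⟨i, hi, hi_far⟩ := (hf.and_eventually hfar).exists
  refine (hi.trans ?_).not_gt hi_far
  calc μ {ω | dist (f i ω) t < δ}
      ≤ μ ({ω | dist (g ω) t < δ'} ∪ {ω | δ' - δ ≤ dist (f i ω) (g ω)}) := by
        refine measure_mono fun ω hω => or_iff_not_imp_right.2 fun hclose => ?_
        have htri := dist_triangle_left (g ω) t (f i ω)
        simp only [mem_ofPred_eq, not_le] at hω hclose ⊢
        linarith
    _ ≤ μ {ω | δ' - δ ≤ dist (f i ω) (g ω)} := by
        simpa [hzero] using
          measure_union_le (μ := μ) {ω | dist (g ω) t < δ'} {ω | δ' - δ ≤ dist (f i ω) (g ω)}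

theorem sum_bernsteinPolynomial_eval (n : ℕ) (x : ℝ) :
    ∑ k ∈ Finset.range (n + 1), (bernsteinPolynomial ℝ n k).eval x = 1 := by
  rw [← Polynomial.eval_finsetSum, bernsteinPolynomial.sum, Polynomial.eval_one]

theorem sum_mul_bernsteinPolynomial_eval (n : ℕ) (x : ℝ) :
    ∑ k ∈ Finset.range (n + 1), k * (bernsteinPolynomial ℝ n k).eval x = n * x := by
  simpa [Polynomial.eval_finsetSum] using
    congrArg (Polynomial.eval x) (bernsteinPolynomial.sum_smul ℝ n)

theorem bernsteinPolynomial_eval_pos {n k : ℕ} (hk : k ≤ n) {x : ℝ} (hx : x ∈ Ioo (0 : ℝ) 1) :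
    0 < (bernsteinPolynomial ℝ n k).eval x := by
  have hchoose : (0 : ℝ) < n.choose k := by exact_mod_cast Nat.choose_pos hk
  have hx_sub : 0 < 1 - x := sub_pos.2 hx.2
  have hx_pos := hx.1
  simp only [bernsteinPolynomial, Polynomial.eval_mul, Polynomial.eval_pow, Polynomial.eval_sub,
    Polynomial.eval_natCast, Polynomial.eval_X, Polynomial.eval_one]
  positivity

theorem sum_Ico_inv_succ_sq_le {N : ℕ} (hN : N ≠ 0) (n : ℕ) :
    ∑ i ∈ Finset.Ico N n, (((i + 1 : ℕ) : ℝ)⁻¹) ^ 2 ≤ (N : ℝ)⁻¹ := by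
  rcases le_total N n with hn | hn
  · calc ∑ i ∈ Finset.Ico N n, (((i + 1 : ℕ) : ℝ)⁻¹) ^ 2
        = ∑ i ∈ Finset.Ioc N n, ((i : ℝ) ^ 2)⁻¹ := by
          simp only [inv_pow]
          rw [Finset.sum_Ico_add' (fun i : ℕ => ((i : ℝ) ^ 2)⁻¹), Finset.Ico_add_one_add_one_eq_Ioc]
      _ ≤ (N : ℝ)⁻¹ - (n : ℝ)⁻¹ := sum_Ioc_inv_sq_le_sub hN hn
      _ ≤ (N : ℝ)⁻¹ := sub_le_self _ (by positivity)
  · simp [Finset.Ico_eq_empty_of_le hn]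

namespace PAProcess

variable {Ω : Type} [MeasurableSpace Ω] (P : PAProcess Ω)

instance : IsProbabilityMeasure P.μ := P.isProb

theorem S_succ (n : ℕ) : P.S (n + 1) = P.S n + 2 * P.m := by
  unfold S
  ring

theorem two_mul_m_mul_le_S (n : ℕ) : 2 * P.m * n ≤ P.S n := by
  unfold S
  omega

theorem le_S (n : ℕ) : n ≤ P.S n := by
  have hm := P.hm
  have hS := P.two_mul_m_mul_le_S n
  nlinarith

theorem S_mul_x (n : ℕ) (ω : Ω) : P.S n * P.x n ω = P.X n ω := by
  refine mul_div_cancel_of_imp' fun hS => ?_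
  have hX : P.X n ω ≤ P.S n := P.hXle n ω
  exact_mod_cast Nat.le_zero.1 (hX.trans_eq (by exact_mod_cast hS))

theorem x_mem_Icc (n : ℕ) (ω : Ω) : P.x n ω ∈ Icc (0 : ℝ) 1 :=
  ⟨by unfold x; positivity,
    div_le_one_of_le₀ (by exact_mod_cast P.hXle n ω) (Nat.cast_nonneg _)⟩

theorem tendsto_S_atTop : Tendsto (fun n => (P.S n : ℝ)) atTop atTop :=
  tendsto_natCast_atTop_atTop.comp (tendsto_atTop_mono P.le_S tendsto_id)

theorem measurable_A_real (n : ℕ) : Measurable[P.F n] fun ω => (P.A n ω : ℝ) :=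
  measurable_from_nat.comp (P.adaptedA n)

theorem measurable_X_real (n : ℕ) : Measurable[P.F n] fun ω => (P.X n ω : ℝ) :=
  measurable_from_nat.comp (P.adaptedX n)

theorem measurable_x (n : ℕ) : Measurable[P.F n] (P.x n) :=
  (P.measurable_X_real n).div_const _

theorem integrable_X (n : ℕ) : Integrable (fun ω => (P.X n ω : ℝ)) P.μ := by
  refine .of_bound ((P.measurable_X_real n).mono (P.F.le n) le_rfl).aestronglyMeasurable
    (P.S n : ℝ) (ae_of_all _ fun ω => ?_)
  rw [Real.norm_natCast]
  exact_mod_cast P.hXle n ω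

/-- The possible values of the pair `(u_{n+1}, I_{n+1})` drawn at a step of the process, with
`I_{n+1}` encoded as a Boolean that is `true` for a red new node. -/
def transitions : Finset (ℕ × Bool) := Finset.range (P.m + 1) ×ˢ Finset.univ

theorem mem_transitions {i : ℕ × Bool} : i ∈ P.transitions ↔ i.1 ≤ P.m := by
  simp [transitions]

/-- The event that step `n + 1` follows the transition `(k, b)`, i.e. that
`(u_{n+1}, I_{n+1}) = (k, b)`, expressed through the increments of `A` and `X`. -/
def stepEvent (n : ℕ) (i : ℕ × Bool) : Set Ω :=
  {ω | P.A (n + 1) ω = P.A n ω + i.2.toNat ∧ P.X (n + 1) ω = P.X n ω + i.1 + P.m * i.2.toNat}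

/-- The probability that a new node with `k` red neighbours gets the colour `b`. -/
def colorProb (i : ℕ × Bool) : ℝ := if i.2 then P.p i.1 else 1 - P.p i.1

/-- The conditional probability of the transition `(k, b)` given `F n`: the `Binomial(m, x_n)`
weight of `k`, written as a Bernstein polynomial, times the colour probability. -/
def stepProb (n : ℕ) (i : ℕ × Bool) (ω : Ω) : ℝ :=
  (bernsteinPolynomial ℝ P.m i.1).eval (P.x n ω) * P.colorProb i

theorem measurableSet_stepEvent (n : ℕ) (i : ℕ × Bool) : MeasurableSet (P.stepEvent n i) := by
  have hA (k : ℕ) : Measurable (P.A k) := (P.adaptedA k).mono (P.F.le k) le_rfl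
  have hX (k : ℕ) : Measurable (P.X k) := (P.adaptedX k).mono (P.F.le k) le_rfl
  exact (measurableSet_eq_fun (hA _) ((hA n).add_const _)).inter
    (measurableSet_eq_fun (hX _) (((hX n).add_const _).add_const _))

theorem pairwise_disjoint_stepEvent (n : ℕ) :
    Pairwise (Function.onFun Disjoint (P.stepEvent n)) := by
  intro i j hij
  refine disjoint_left.2 fun ω hi hj => hij ?_
  have hcolor : i.2.toNat = j.2.toNat := Nat.add_left_cancel (hi.1.symm.trans hj.1)
  have hdegree := hi.2.symm.trans hj.2
  rw [hcolor] at hdegree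
  exact Prod.ext (by omega) (Function.LeftInverse.injective Bool.ofNat_toNat hcolor)

theorem condExp_indicator_stepEvent (n : ℕ) {i : ℕ × Bool} (hi : i ∈ P.transitions) :
    P.μ[(P.stepEvent n i).indicator (fun _ => (1 : ℝ)) | P.F n] =ᵐ[P.μ] P.stepProb n i := by
  have hk : i.1 ≤ P.m := P.mem_transitions.1 hi
  obtain ⟨k, color⟩ := i
  have hprob (b : Bool) : P.stepProb n (k, b) = fun ω => (P.m.choose k : ℝ) *
      ((P.X n ω : ℝ) / ((P.X0 : ℝ) + P.Y0 + 2 * P.m * n)) ^ k *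
      (1 - (P.X n ω : ℝ) / ((P.X0 : ℝ) + P.Y0 + 2 * P.m * n)) ^ (P.m - k) *
      P.colorProb (k, b) := by
    ext ω
    simp [stepProb, bernsteinPolynomial, x, S]
  rw [hprob]
  cases color
  · simpa [stepEvent, colorProb] using P.step_blue n k hk
  · simpa [stepEvent, colorProb] using P.step_red n k hk

theorem sum_stepProb (n : ℕ) (ω : Ω) : ∑ i ∈ P.transitions, P.stepProb n i ω = 1 := by
  simp only [transitions, Finset.sum_product, Fintype.sum_bool, stepProb, ← mul_add]
  simp [colorProb, sum_bernsteinPolynomial_eval]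

theorem ae_exists_mem_stepEvent (n : ℕ) :
    ∀ᵐ ω ∂P.μ, ∃ i ∈ P.transitions, ω ∈ P.stepEvent n i := by
  refine ae_exists_mem_of_sum_condExp_indicator_eq_one (P.F.le n)
    (fun i _ => P.measurableSet_stepEvent n i) ((P.pairwise_disjoint_stepEvent n).set_pairwise _) ?_
  have hcond := (ae_ball_iff P.transitions.countable_toSet).2
    fun i hi => P.condExp_indicator_stepEvent n hi
  filter_upwards [hcond] with ω hω
  rw [Finset.sum_congr rfl hω, P.sum_stepProb]

theorem condExp_eq_sum_stepProb (n : ℕ) {f : Ω → ℝ} {c : ℕ × Bool → ℝ}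
    (hf : ∀ i ∈ P.transitions, EqOn f (fun _ => c i) (P.stepEvent n i)) :
    P.μ[f | P.F n] =ᵐ[P.μ] fun ω => ∑ i ∈ P.transitions, c i * P.stepProb n i ω := by
  have hcond := (ae_ball_iff P.transitions.countable_toSet).2
    fun i hi => P.condExp_indicator_stepEvent n hi
  filter_upwards [condExp_eq_sum_of_eqOn_const (P.F n)
    (fun i _ => P.measurableSet_stepEvent n i) ((P.pairwise_disjoint_stepEvent n).set_pairwise _)
    (P.ae_exists_mem_stepEvent n) hf, hcond] with ω hω hω_cond
  rw [hω, Finset.sum_apply]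
  exact Finset.sum_congr rfl fun i hi => by rw [Pi.smul_apply, hω_cond i hi, smul_eq_mul]

theorem ae_A_le (n : ℕ) : ∀ᵐ ω ∂P.μ, P.A n ω ≤ P.A0 + n := by
  induction n with
  | zero => exact ae_of_all _ fun ω => (P.hA0 ω).le
  | succ n ih =>
    filter_upwards [ih, P.ae_exists_mem_stepEvent n] with ω hω ⟨i, _, hstep, _⟩
    have hcolor := i.2.toNat_le
    omega

theorem integrable_A (n : ℕ) : Integrable (fun ω => (P.A n ω : ℝ)) P.μ := by
  refine .of_bound ((P.measurable_A_real n).mono (P.F.le n) le_rfl).aestronglyMeasurable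
    ((P.A0 + n : ℕ) : ℝ) ?_
  filter_upwards [P.ae_A_le n] with ω hω
  rw [Real.norm_natCast]
  exact_mod_cast hω

theorem x_succ_sub (n : ℕ) (ω : Ω) : P.x (n + 1) ω - P.x n ω =
    (P.S (n + 1) : ℝ)⁻¹ * ((P.X (n + 1) ω : ℝ) - P.X n ω - 2 * P.m * P.x n ω) := by
  have hm := P.hm
  have hS : (P.S (n + 1) : ℝ) ≠ 0 := by
    rw [Nat.cast_ne_zero, S_succ]
    omega
  have hSx := P.S_mul_x n ω
  have hSx_succ := P.S_mul_x (n + 1) ω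
  rw [eq_inv_mul_iff_mul_eq₀ hS, ← hSx, ← hSx_succ, S_succ]
  push_cast
  ring

theorem ae_abs_x_succ_sub_le (n : ℕ) :
    ∀ᵐ ω ∂P.μ, |P.x (n + 1) ω - P.x n ω| ≤ ((n + 1 : ℕ) : ℝ)⁻¹ := by
  filter_upwards [P.ae_exists_mem_stepEvent n] with ω ⟨i, hi, _, hX⟩
  have hk : (i.1 : ℝ) ≤ P.m := by
    exact_mod_cast P.mem_transitions.1 hi
  have hcolor : (i.2.toNat : ℝ) ≤ 1 := by exact_mod_cast i.2.toNat_le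
  have hm : (0 : ℝ) < P.m := by exact_mod_cast P.hm
  have hSn : (2 * P.m * (n + 1) : ℝ) ≤ P.S (n + 1) := by
    exact_mod_cast P.two_mul_m_mul_le_S (n + 1)
  have hdegree : |(P.X (n + 1) ω : ℝ) - P.X n ω - 2 * P.m * P.x n ω| ≤ 2 * P.m := by
    obtain ⟨hx_nonneg, hx_le⟩ := P.x_mem_Icc n ω
    rw [hX]
    push_cast
    refine abs_sub_le_of_nonneg_of_le ?_ ?_ (by positivity) ?_
    · rw [add_assoc, add_sub_cancel_left]
      positivity
    · linarith [mul_le_of_le_one_right hm.le hcolor]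
    · exact mul_le_of_le_one_right (by positivity) hx_le
  rw [P.x_succ_sub, abs_mul, abs_of_nonneg (by positivity)]
  calc (P.S (n + 1) : ℝ)⁻¹ * |(P.X (n + 1) ω : ℝ) - P.X n ω - 2 * P.m * P.x n ω|
      ≤ (2 * P.m * (n + 1) : ℝ)⁻¹ * (2 * P.m) := by gcongr
    _ = ((n + 1 : ℕ) : ℝ)⁻¹ := by
      push_cast
      field_simp

/-- The excess `X_n - X_0 - 2m(A_n - A_0)` of the red degree over its value if every edge joined
nodes of the same colour; it is the sum of the `u_j - m I_j` over the first `n` steps. -/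
def degreeExcess (n : ℕ) (ω : Ω) : ℝ := (P.X n ω - P.X0) - 2 * P.m * (P.A n ω - P.A0)

theorem degreeExcess_zero (ω : Ω) : P.degreeExcess 0 ω = 0 := by
  simp [degreeExcess, P.hX0, P.hA0]

theorem degreeExcess_succ_sub {n : ℕ} {i : ℕ × Bool} {ω : Ω} (hω : ω ∈ P.stepEvent n i) :
    P.degreeExcess (n + 1) ω - P.degreeExcess n ω = i.1 - P.m * i.2.toNat := by
  rw [degreeExcess, degreeExcess, hω.1, hω.2]
  push_cast
  ring

theorem ae_abs_degreeExcess_succ_sub_le (n : ℕ) :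
    ∀ᵐ ω ∂P.μ, |P.degreeExcess (n + 1) ω - P.degreeExcess n ω| ≤ P.m := by
  filter_upwards [P.ae_exists_mem_stepEvent n] with ω ⟨i, hi, hω⟩
  have hk : (i.1 : ℝ) ≤ P.m := by
    exact_mod_cast P.mem_transitions.1 hi
  have hcolor : (i.2.toNat : ℝ) ≤ 1 := by exact_mod_cast i.2.toNat_le
  rw [P.degreeExcess_succ_sub hω]
  exact abs_sub_le_of_nonneg_of_le (Nat.cast_nonneg _) hk (by positivity)
    (mul_le_of_le_one_right (Nat.cast_nonneg _) hcolor)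

/-- The linear model: the new node is red with probability `k / m` when `k` of its `m` neighbours
are red. -/
def IsLinear : Prop := ∀ k ≤ P.m, P.p k = (k : ℝ) / P.m

variable {P}

theorem IsLinear.sum_mul_stepProb (hP : P.IsLinear) (n : ℕ) (ω : Ω) (α β : ℝ) :
    ∑ i ∈ P.transitions, (α * i.1 + β * i.2.toNat) * P.stepProb n i ω =
      (α * P.m + β) * P.x n ω := by
  have hm : (P.m : ℝ) ≠ 0 := Nat.cast_ne_zero.2 (Nat.one_le_iff_ne_zero.1 P.hm)
  calc ∑ i ∈ P.transitions, (α * i.1 + β * i.2.toNat) * P.stepProb n i ω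
      = ∑ k ∈ Finset.range (P.m + 1),
          (α + β / P.m) * (k * (bernsteinPolynomial ℝ P.m k).eval (P.x n ω)) := by
        rw [transitions, Finset.sum_product]
        refine Finset.sum_congr rfl fun k hk => ?_
        have hpk : P.p k = k / P.m := hP k (Nat.lt_succ_iff.1 (Finset.mem_range.1 hk))
        simp only [Fintype.sum_bool, stepProb, colorProb, hpk, Bool.toNat_true, Bool.toNat_false,
          if_true, Bool.false_eq_true, if_false]
        push_cast
        ring
    _ = (α * P.m + β) * P.x n ω := by
        rw [← Finset.mul_sum, sum_mul_bernsteinPolynomial_eval]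
        field_simp

theorem IsLinear.condExp_eq_of_eqOn_stepEvent (hP : P.IsLinear) (n : ℕ) {f : Ω → ℝ} {α β : ℝ}
    (hf : ∀ i ∈ P.transitions, EqOn f (fun _ => α * i.1 + β * i.2.toNat) (P.stepEvent n i)) :
    P.μ[f | P.F n] =ᵐ[P.μ] fun ω => (α * P.m + β) * P.x n ω := by
  simpa only [hP.sum_mul_stepProb] using P.condExp_eq_sum_stepProb n hf

theorem IsLinear.martingale_degreeExcess (hP : P.IsLinear) :
    Martingale P.degreeExcess P.F P.μ := by
  refine martingale_of_condExp_sub_eq_zero_nat (fun n => ?_) (fun n => ?_) fun n => ?_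
  · exact (((P.measurable_X_real n).sub_const _).sub
      (((P.measurable_A_real n).sub_const _).const_mul _)).stronglyMeasurable
  · exact ((P.integrable_X n).sub (integrable_const _)).sub
      (((P.integrable_A n).sub (integrable_const _)).const_mul _)
  · have hincr := hP.condExp_eq_of_eqOn_stepEvent n
      (f := P.degreeExcess (n + 1) - P.degreeExcess n) (α := 1) (β := -P.m) fun i _ ω hω => by
        rw [Pi.sub_apply, P.degreeExcess_succ_sub hω]
        ring
    filter_upwards [hincr] with ω hω
    simp [hω]

theorem integrable_x (n : ℕ) : Integrable (P.x n) P.μ := (P.integrable_X n).div_const _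

theorem IsLinear.martingale_x (hP : P.IsLinear) : Martingale P.x P.F P.μ := by
  refine martingale_of_condExp_sub_eq_zero_nat (fun n => (P.measurable_x n).stronglyMeasurable)
    integrable_x fun n => ?_
  let degreeIncr : Ω → ℝ := fun ω => P.X (n + 1) ω - P.X n ω
  have hdegree : P.μ[degreeIncr | P.F n] =ᵐ[P.μ] fun ω => (1 * P.m + P.m) * P.x n ω :=
    hP.condExp_eq_of_eqOn_stepEvent n fun i _ ω hω => by
      simp only [degreeIncr]
      rw [hω.2]
      push_cast
      ring
  have hdegree_int : Integrable degreeIncr P.μ :=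
    (P.integrable_X (n + 1)).sub (P.integrable_X n)
  have hdrift_meas : StronglyMeasurable[P.F n] ((2 * P.m : ℝ) • P.x n) :=
    (P.measurable_x n).stronglyMeasurable.const_smul _
  have hdrift_int : Integrable ((2 * P.m : ℝ) • P.x n) P.μ := (integrable_x n).smul _
  have hincr : P.x (n + 1) - P.x n =
      (P.S (n + 1) : ℝ)⁻¹ • (degreeIncr - (2 * P.m : ℝ) • P.x n) := funext (P.x_succ_sub n)
  rw [hincr]
  filter_upwards [hdegree,
    condExp_smul (μ := P.μ) (P.S (n + 1) : ℝ)⁻¹ (degreeIncr - (2 * P.m : ℝ) • P.x n) (P.F n),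
    condExp_sub hdegree_int hdrift_int (P.F n)]
    with ω h_degree h_smul h_sub
  rw [condExp_of_stronglyMeasurable (P.F.le n) hdrift_meas hdrift_int] at h_sub
  rw [h_smul, Pi.smul_apply, h_sub, Pi.sub_apply, h_degree]
  simp only [Pi.smul_apply, smul_eq_mul, Pi.zero_apply]
  ring

variable (P)

theorem tendsto_const_div_S (c : ℝ) : Tendsto (fun n => c / P.S n) atTop (nhds 0) :=
  P.tendsto_S_atTop.const_div_atTop c

theorem tendsto_degree_div_S {j : ℕ → ℝ} {l : ℝ}
    (hj : Tendsto (fun n => j n / n) atTop (nhds l)) :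
    Tendsto (fun n => (P.X0 + 2 * P.m * j n) / P.S n) atTop (nhds l) := by
  have hlim : Tendsto (fun n : ℕ => j n / n * (1 - (P.X0 + P.Y0 : ℝ) / P.S n) + P.X0 / P.S n)
      atTop (nhds l) := by
    simpa using (hj.mul ((P.tendsto_const_div_S (P.X0 + P.Y0)).const_sub 1)).add
      (P.tendsto_const_div_S P.X0)
  refine hlim.congr' ?_
  filter_upwards [eventually_gt_atTop 0, P.tendsto_S_atTop.eventually_gt_atTop 0] with n hn hSn
  have hS : (P.X0 + P.Y0 : ℝ) = P.S n - 2 * P.m * n := by simp [S]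
  rw [hS]
  field_simp
  ring

theorem tendsto_A_sub_div {ω : Ω} {l : ℝ} (ha : Tendsto (fun n => P.a n ω) atTop (nhds l)) :
    Tendsto (fun n : ℕ => ((P.A n ω : ℝ) - P.A0) / n) atTop (nhds l) := by
  have hlim : Tendsto (fun n : ℕ => P.a n ω * (1 + (P.A0 + P.B0 : ℝ) / n) - P.A0 / n) atTop
      (nhds l) := by
    simpa using (ha.mul ((tendsto_const_div_atTop_nhds_zero_nat (P.A0 + P.B0 : ℝ)).const_add 1)).sub
      (tendsto_const_div_atTop_nhds_zero_nat (P.A0 : ℝ))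
  refine hlim.congr' ?_
  filter_upwards [eventually_gt_atTop 0] with n hn
  rw [a]
  field_simp
  ring

theorem x_eq_add_degreeExcess_div (n : ℕ) (ω : Ω) : P.x n ω =
    (P.X0 + 2 * P.m * (P.A n ω - P.A0)) / P.S n + P.degreeExcess n ω / P.S n := by
  rw [← add_div, x, degreeExcess]
  congr 1
  ring

variable {P}

theorem IsLinear.tendstoInMeasure_degreeExcess_div (hP : P.IsLinear) :
    TendstoInMeasure P.μ (fun n ω => P.degreeExcess n ω / P.S n) atTop 0 := by
  have hscale : Tendsto (fun n : ℕ => (n : ℝ) / P.S n ^ 2) atTop (nhds 0) := by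
    refine squeeze_zero (fun n => by positivity) (fun n => ?_) (P.tendsto_const_div_S 1)
    have hn : (n : ℝ) ≤ P.S n := by exact_mod_cast P.le_S n
    rw [sq, ← div_div]
    gcongr
    exact div_le_one_of_le₀ hn (Nat.cast_nonneg _)
  simpa [degreeExcess_zero] using tendstoInMeasure_sub_div_of_martingale
    hP.martingale_degreeExcess P.ae_abs_degreeExcess_succ_sub_le hscale

theorem IsLinear.tendstoInMeasure_x (hP : P.IsLinear) {L : Ω → ℝ}
    (hL : ∀ᵐ ω ∂P.μ, Tendsto (fun n => P.a n ω) atTop (nhds (L ω))) :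
    TendstoInMeasure P.μ P.x atTop L := by
  have hmain : TendstoInMeasure P.μ
      (fun n ω => (P.X0 + 2 * P.m * ((P.A n ω : ℝ) - P.A0)) / P.S n) atTop L := by
    refine tendstoInMeasure_of_tendsto_ae (fun n => ?_) ?_
    · exact ((((((P.measurable_A_real n).mono (P.F.le n) le_rfl).sub_const _).const_mul _).const_add
        _).div_const _).aestronglyMeasurable
    · filter_upwards [hL] with ω hω
      exact P.tendsto_degree_div_S (P.tendsto_A_sub_div hω)
  rw [show P.x = _ from funext₂ P.x_eq_add_degreeExcess_div, ← add_zero L]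
  exact tendstoInMeasure_add hmain hP.tendstoInMeasure_degreeExcess_div

variable (P) in
theorem measure_inter_stepEvent_pos {n c : ℕ} {i : ℕ × Bool} (hi : i ∈ P.transitions)
    (hcolor : 0 < P.colorProb i) (hc : 0 < c) (hcS : c < P.S n)
    (hμ : 0 < P.μ {ω | P.X n ω = c}) :
    0 < P.μ ({ω | P.X n ω = c} ∩ P.stepEvent n i) := by
  refine measure_inter_pos_of_condExp_indicator_pos (P.F.le n)
    (P.adaptedX n (measurableSet_singleton c)) (P.measurableSet_stepEvent n i) hμ ?_
  filter_upwards [P.condExp_indicator_stepEvent n hi] with ω hω hXc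
  have hk : i.1 ≤ P.m := P.mem_transitions.1 hi
  have hx : P.x n ω ∈ Ioo (0 : ℝ) 1 := by
    have hS : (0 : ℝ) < P.S n := by exact_mod_cast hc.trans hcS
    rw [x, show P.X n ω = c from hXc]
    exact ⟨by positivity, (div_lt_one hS).2 (by exact_mod_cast hcS)⟩
  rw [hω]
  exact mul_pos (bernsteinPolynomial_eval_pos hk hx) hcolor

theorem IsLinear.measure_X_eq_pos (hP : P.IsLinear) (hX0 : 0 < P.X0) (hY0 : 0 < P.Y0) {N j : ℕ}
    (hj : j ≤ N) : 0 < P.μ {ω | P.X N ω = P.X0 + 2 * P.m * j} := by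
  have hm : (P.m : ℝ) ≠ 0 := Nat.cast_ne_zero.2 (Nat.one_le_iff_ne_zero.1 P.hm)
  have hlt {n j : ℕ} (hj : j ≤ n) : P.X0 + 2 * P.m * j < P.S n := by
    have := Nat.mul_le_mul_left (2 * P.m) hj
    unfold S
    omega
  have hblue : 0 < P.colorProb (0, false) := by simp [colorProb, hP 0 (Nat.zero_le _)]
  have hred : 0 < P.colorProb (P.m, true) := by simp [colorProb, hP P.m le_rfl, hm]
  induction N generalizing j with
  | zero => simp [Nat.le_zero.1 hj, P.hX0]
  | succ N ih =>
    rcases hj.lt_or_eq with hjN | rfl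
    · have hjN : j ≤ N := Nat.lt_succ_iff.1 hjN
      refine (P.measure_inter_stepEvent_pos (i := (0, false)) (P.mem_transitions.2 (by simp)) hblue
        (by omega) (hlt hjN) (ih hjN)).trans_le (measure_mono ?_)
      rintro ω ⟨hω, -, hstep⟩
      rw [mem_ofPred_eq] at hω ⊢
      simpa [hω] using hstep
    · refine (P.measure_inter_stepEvent_pos (i := (P.m, true)) (P.mem_transitions.2 (by simp)) hred
        (by omega) (hlt le_rfl) (ih le_rfl)).trans_le (measure_mono ?_)
      rintro ω ⟨hω, -, hstep⟩
      rw [mem_ofPred_eq] at hω ⊢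
      rw [hstep, hω, Bool.toNat_true]
      ring

theorem IsLinear.half_measureReal_le_inter_abs_x_sub_lt (hP : P.IsLinear) {N n : ℕ} (hn : N ≤ n)
    {δ : ℝ} (hδ : 0 < δ) (hN : 2 / δ ^ 2 ≤ N) {E : Set Ω} (hE : MeasurableSet[P.F N] E) :
    P.μ.real E / 2 ≤ P.μ.real (E ∩ {ω | |P.x n ω - P.x N ω| < δ}) := by
  have hN_pos : (0 : ℝ) < N := (by positivity : 0 < 2 / δ ^ 2).trans_le hN
  refine half_measureReal_le_inter_abs_sub_lt_of_martingale hP.martingale_x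
    P.ae_abs_x_succ_sub_le hn hE hδ ?_
  calc 2 * ∑ i ∈ Finset.Ico N n, (((i + 1 : ℕ) : ℝ)⁻¹) ^ 2 ≤ 2 * (N : ℝ)⁻¹ := by
        gcongr
        exact sum_Ico_inv_succ_sq_le (by rintro rfl; simp at hN_pos) n
    _ ≤ δ ^ 2 := by
        rw [div_le_iff₀ (by positivity)] at hN
        rw [← div_eq_mul_inv, div_le_iff₀ hN_pos]
        linarith

theorem IsLinear.exists_measure_dist_x_lt (hP : P.IsLinear) (hX0 : 0 < P.X0) (hY0 : 0 < P.Y0)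
    {t : ℝ} (ht : t ∈ Icc (0 : ℝ) 1) {δ : ℝ} (hδ : 0 < δ) :
    ∃ c > 0, ∀ᶠ n in atTop, c ≤ P.μ {ω | dist (P.x n ω) t < δ} := by
  have hgrid : Tendsto (fun N : ℕ => (P.X0 + 2 * P.m * ⌊t * N⌋₊ : ℝ) / P.S N) atTop (nhds t) :=
    P.tendsto_degree_div_S
      ((tendsto_nat_floor_mul_div_atTop ht.1).comp tendsto_natCast_atTop_atTop)
  obtain ⟨N, hN_near, hN_large⟩ := ((Metric.tendsto_nhds.1 hgrid (δ / 2) (half_pos hδ)).and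
    (tendsto_natCast_atTop_atTop.eventually_ge_atTop (2 / (δ / 2) ^ 2))).exists
  have hfloor : ⌊t * N⌋₊ ≤ N :=
    Nat.floor_le_of_le (mul_le_of_le_one_left (Nat.cast_nonneg _) ht.2)
  set E := {ω | P.X N ω = P.X0 + 2 * P.m * ⌊t * N⌋₊}
  have hE_pos : 0 < P.μ.real E :=
    ENNReal.toReal_pos (hP.measure_X_eq_pos hX0 hY0 hfloor).ne' (measure_ne_top _ _)
  refine ⟨ENNReal.ofReal (P.μ.real E / 2), by simpa using hE_pos, ?_⟩
  filter_upwards [eventually_ge_atTop N] with n hn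
  refine ENNReal.ofReal_le_of_le_toReal ((hP.half_measureReal_le_inter_abs_x_sub_lt hn
    (half_pos hδ) hN_large (P.adaptedX N (measurableSet_singleton _))).trans (measureReal_mono ?_))
  rintro ω ⟨hωE, hω_near⟩
  have hx : P.x N ω = (P.X0 + 2 * P.m * ⌊t * N⌋₊) / P.S N := by
    rw [x, show P.X N ω = _ from hωE]
    push_cast
    rfl
  rw [← hx] at hN_near
  have htri := dist_triangle (P.x n ω) (P.x N ω) t
  rw [Real.dist_eq (P.x n ω) (P.x N ω)] at htri
  simp only [mem_ofPred_eq] at hω_near ⊢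
  linarith

theorem IsLinear.measure_dist_limit_lt_pos (hP : P.IsLinear) (hX0 : 0 < P.X0) (hY0 : 0 < P.Y0)
    {L : Ω → ℝ} (hL : ∀ᵐ ω ∂P.μ, Tendsto (fun n => P.a n ω) atTop (nhds (L ω)))
    {t : ℝ} (ht : t ∈ Icc (0 : ℝ) 1) {δ : ℝ} (hδ : 0 < δ) :
    0 < P.μ {ω | dist (L ω) t < δ} := by
  obtain ⟨c, hc, hx⟩ := hP.exists_measure_dist_x_lt hX0 hY0 ht (half_pos hδ)
  exact measure_dist_lt_pos_of_tendstoInMeasure (hP.tendstoInMeasure_x hL) (half_lt_self hδ) hc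
    hx.frequently

end PAProcess

/-- **Linear model, full support.** In the linear model (`p_k = k/m` for all `0 ≤ k ≤ m`) with
`X_0 > 0` and `Y_0 > 0`, the almost sure limit `a = lim a_n` has full support on `[0,1]`: for
every interval `(r, r+ε) ⊆ (0,1)` with `ε > 0`, one has `P(a ∈ (r, r+ε)) > 0`. -/
theorem linear_model_limit_full_support
    {Ω : Type} [MeasurableSpace Ω] (P : PAProcess Ω)
    (hlin : ∀ k ≤ P.m, P.p k = (k : ℝ) / P.m)
    (hX0 : 0 < P.X0) (hY0 : 0 < P.Y0)
    (L : Ω → ℝ)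
    (hL : ∀ᵐ ω ∂P.μ, Tendsto (fun n => P.a n ω) atTop (nhds (L ω)))
    (r ε : ℝ) (hε : 0 < ε) (hsub : Set.Ioo r (r + ε) ⊆ Set.Ioo (0 : ℝ) 1) :
    0 < P.μ {ω | L ω ∈ Set.Ioo r (r + ε)} := by
  have hP : P.IsLinear := hlin
  have hmid : r + ε / 2 ∈ Icc (0 : ℝ) 1 :=
    Ioo_subset_Icc_self (hsub ⟨by linarith, by linarith⟩)
  have hball : Metric.ball (r + ε / 2) (ε / 2) = Ioo r (r + ε) := by
    rw [Real.ball_eq_Ioo]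
    ring_nf
  rw [← hball]
  exact hP.measure_dist_limit_lt_pos hX0 hY0 hL hmid (half_pos hε)
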